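/- Let G be a finite simple graph on n vertices, let r ≥ 1, and let L assign to each vertex v of G a set L(v) ⊆ {1, …, r} of admissible colors. Let G′ be the graph obtained from G by adding r new vertices u_1, …, u_r forming a complete graph, and adding an edge between u_i and a vertex v of G whenever i ∉ L(v). Then G admits a proper coloring φ with φ(v) ∈ L(v) for every vertex v and with every color class of size ⌊n/r⌋ or ⌈n/r⌉, if and only if G′ admits an equitable r-coloring. -/

import Mathlib

/-- `φ` is a proper coloring of the simple graph `G`. -/
def IsProperColoring {V : Type*} {k : ℕ} (G : SimpleGraph V) (φ : V → Fin k) : Prop :=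
  ∀ u v : V, G.Adj u v → φ u ≠ φ v

/-- Every color class of `φ` has size `⌊n/k⌋` or `⌈n/k⌉`, where `n` is the number of
vertices. -/
def IsEquitable {V : Type*} [Fintype V] {k : ℕ} (φ : V → Fin k) : Prop :=
  ∀ i : Fin k,
    (Finset.univ.filter fun v => φ v = i).card = Fintype.card V / k ∨
    (Finset.univ.filter fun v => φ v = i).card = (Fintype.card V + k - 1) / k

/-- The graph obtained from `G` by adding `r` new vertices `u_1, …, u_r` forming a clique,
with an edge between `u_i` and a vertex `v` of `G` whenever `i ∉ L v`. -/
def listGadgetGraph {V : Type*} (G : SimpleGraph V) {r : ℕ} (L : V → Set (Fin r)) :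
    SimpleGraph (V ⊕ Fin r) :=
  SimpleGraph.fromRel fun a b =>
    match a, b with
    | Sum.inl u, Sum.inl v => G.Adj u v
    | Sum.inl v, Sum.inr i => i ∉ L v
    | Sum.inr i, Sum.inl v => i ∉ L v
    | Sum.inr _, Sum.inr _ => True

/-!
In a proper coloring of `G'` the clique vertices `u_i` use every color exactly once, so after
renaming the colors we may assume that `u_i` has color `i`. Then the edges from the clique to `G`
say exactly that `v` avoids the colors outside `L v`, and deleting the clique removes one vertex
from every color class, which shifts both admissible class sizes by one.
-/

open Function

section Extension

variable {V α β : Type*}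

theorem exists_equiv_comp_sumElim_id {ψ : V ⊕ α → β} (hψ : Bijective (ψ ∘ Sum.inr)) :
    ∃ (σ : α ≃ β) (φ : V → α), ψ = σ ∘ Sum.elim φ id := by
  let σ : α ≃ β := Equiv.ofBijective _ hψ
  refine ⟨σ, σ.symm ∘ ψ ∘ Sum.inl, ?_⟩
  ext (v | a)
  · exact (σ.apply_symm_apply _).symm
  · rfl

theorem card_filter_sumElim_id [Fintype V] [Fintype α] [DecidableEq α] (φ : V → α) (a : α) :
    (Finset.univ.filter fun x => Sum.elim φ id x = a).card =
      (Finset.univ.filter fun v => φ v = a).card + 1 := by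
  have hfiber : (Finset.univ.filter fun x => Sum.elim φ id x = a) =
      (Finset.univ.filter fun v => φ v = a).disjSum {a} := by
    ext (v | b) <;> simp
  rw [hfiber, Finset.card_disjSum, Finset.card_singleton]

end Extension

theorem isProperColoring_comp_iff {V : Type*} {G : SimpleGraph V} {k l : ℕ}
    {σ : Fin k → Fin l} (hσ : Injective σ) {φ : V → Fin k} :
    IsProperColoring G (σ ∘ φ) ↔ IsProperColoring G φ := by
  simp only [IsProperColoring, comp_apply, hσ.ne_iff]

section Equitable

variable {V : Type*} [Fintype V] {k : ℕ}

theorem isEquitable_perm_comp_iff (σ : Equiv.Perm (Fin k)) {φ : V → Fin k} :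
    IsEquitable (σ ∘ φ) ↔ IsEquitable φ := by
  unfold IsEquitable
  rw [← σ.forall_congr_right]
  simp only [comp_apply, σ.apply_eq_iff_eq]

theorem isEquitable_sumElim_id_iff {φ : V → Fin k} :
    IsEquitable (Sum.elim φ id) ↔ IsEquitable φ := by
  refine forall_congr' fun i => ?_
  have hfloor : (Fintype.card V + k) / k = Fintype.card V / k + 1 :=
    Nat.add_div_right _ i.pos
  have hceil : (Fintype.card V + k + k - 1) / k = (Fintype.card V + k - 1) / k + 1 := by
    rw [← Nat.add_div_right _ i.pos, Nat.sub_add_comm (Nat.le_add_left_of_le i.pos)]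
  rw [card_filter_sumElim_id, Fintype.card_sum, Fintype.card_fin, hfloor, hceil,
    Nat.add_right_cancel_iff, Nat.add_right_cancel_iff]

end Equitable

section Gadget

variable {V : Type*} {G : SimpleGraph V} {r : ℕ} {L : V → Set (Fin r)}

theorem listGadgetGraph_adj_inl_inl {u v : V} :
    (listGadgetGraph G L).Adj (Sum.inl u) (Sum.inl v) ↔ G.Adj u v := by
  simpa [listGadgetGraph, G.adj_comm v u] using G.ne_of_adj

theorem listGadgetGraph_adj_inl_inr {v : V} {i : Fin r} :
    (listGadgetGraph G L).Adj (Sum.inl v) (Sum.inr i) ↔ i ∉ L v := by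
  simp [listGadgetGraph]

theorem listGadgetGraph_adj_inr_inr {i j : Fin r} :
    (listGadgetGraph G L).Adj (Sum.inr i) (Sum.inr j) ↔ i ≠ j := by
  simp [listGadgetGraph]

theorem IsProperColoring.bijective_comp_inr {ψ : V ⊕ Fin r → Fin r}
    (hψ : IsProperColoring (listGadgetGraph G L) ψ) : Bijective (ψ ∘ Sum.inr) :=
  Finite.injective_iff_bijective.1 <|
    (SimpleGraph.Coloring.mk ψ (hψ _ _)).injective_comp_of_pairwise_adj Sum.inr
      fun _ _ => listGadgetGraph_adj_inr_inr.2

theorem isProperColoring_listGadgetGraph_sumElim_id_iff {φ : V → Fin r} :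
    IsProperColoring (listGadgetGraph G L) (Sum.elim φ id) ↔
      IsProperColoring G φ ∧ ∀ v, φ v ∈ L v := by
  constructor
  · refine fun h => ⟨fun u v huv => h _ _ (listGadgetGraph_adj_inl_inl.2 huv), fun v => ?_⟩
    exact not_not.1 fun hv => h _ _ (listGadgetGraph_adj_inl_inr.2 hv) rfl
  · have color_ne {v : V} {i : Fin r} (hL : φ v ∈ L v)
        (hadj : (listGadgetGraph G L).Adj (Sum.inl v) (Sum.inr i)) : φ v ≠ i :=
      ne_of_mem_of_not_mem hL (listGadgetGraph_adj_inl_inr.1 hadj)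
    rintro ⟨hG, hL⟩ (u | i) (v | j) hadj
    · exact hG u v (listGadgetGraph_adj_inl_inl.1 hadj)
    · exact color_ne (hL u) hadj
    · exact (color_ne (hL v) hadj.symm).symm
    · exact listGadgetGraph_adj_inr_inr.1 hadj

end Gadget

/-- `G` admits a proper coloring respecting the list assignment `L` with all color classes
of size `⌊n/r⌋` or `⌈n/r⌉` if and only if the gadget graph `G'` (obtained from `G` by
adding an `r`-clique simulating the lists) admits an equitable `r`-coloring. -/
theorem stmt12 {V : Type*} [Fintype V] (G : SimpleGraph V) (r : ℕ) (hr : 1 ≤ r)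
    (L : V → Set (Fin r)) :
    (∃ φ : V → Fin r, IsProperColoring G φ ∧ (∀ v : V, φ v ∈ L v) ∧ IsEquitable φ) ↔
    (∃ ψ : V ⊕ Fin r → Fin r,
      IsProperColoring (listGadgetGraph G L) ψ ∧ IsEquitable ψ) := by
  constructor
  · rintro ⟨φ, hG, hL, hφ⟩
    exact ⟨Sum.elim φ id, isProperColoring_listGadgetGraph_sumElim_id_iff.2 ⟨hG, hL⟩,
      isEquitable_sumElim_id_iff.2 hφ⟩
  · rintro ⟨ψ, hproper, hψ⟩
    obtain ⟨σ, φ, rfl⟩ := exists_equiv_comp_sumElim_id hproper.bijective_comp_inr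
    rw [isProperColoring_comp_iff σ.injective,
      isProperColoring_listGadgetGraph_sumElim_id_iff] at hproper
    rw [isEquitable_perm_comp_iff, isEquitable_sumElim_id_iff] at hψ
    exact ⟨φ, hproper.1, hproper.2, hψ⟩
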